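/- Let C be a nodal curve with components C_1,…,C_p, smooth marked point σ(0), and fix (i,j,k) with C_i ∩ C_j ≠ ∅. Let Z_{a,b} := −Σ_m α_{a,b,m} C_m be the twisting divisors making the degree-0 Abel–Jacobi limits σ(0)-quasistable, so that O_C(Z_{a,b})|_C ≅ O_C(−Σ_{Z ∈ T_{a,b}} Z)|_C. Then there is a (possibly empty) subcurve Y of C with C_i ⊆ Y and C_j ⊆ Y^c such that O_C(Z_{i,k})|_C ≅ O_C(Z_{j,k} − Y)|_C. -/

import Mathlib

open Finset

/-- A combinatorial model of a nodal curve: `V` is the set of irreducible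
components, `N` the set of nodes, `ends e` the (one or two) components through
the node `e`, `gen v` the geometric genus of the component `v`, and `base` the
component containing the marked smooth point `σ(0)`. -/
structure NodalGraph where
  V : Type
  N : Type
  [fV : Fintype V]
  [dV : DecidableEq V]
  [fN : Fintype N]
  [dN : DecidableEq N]
  ends : N → V × V
  gen : V → ℕ
  base : V

attribute [instance] NodalGraph.fV NodalGraph.dV NodalGraph.fN NodalGraph.dN

namespace NodalGraph

variable (G : NodalGraph)

/-- Two components are adjacent if some node lies on both. -/
def Adj (a b : G.V) : Prop := ∃ e, G.ends e = (a, b) ∨ G.ends e = (b, a)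

/-- The set of terminal points of a subcurve `Z`, i.e. the nodes in `Z ∩ Zᶜ`. -/
def Term (Z : Finset G.V) : Finset G.N :=
  univ.filter (fun e =>
    ((G.ends e).1 ∈ Z ∧ (G.ends e).2 ∉ Z) ∨ ((G.ends e).1 ∉ Z ∧ (G.ends e).2 ∈ Z))

/-- `k_Z`, the number of terminal points of `Z`. -/
def k (Z : Finset G.V) : ℕ := (G.Term Z).card

/-- A (nonempty) subcurve is connected. -/
def ConnSub (Z : Finset G.V) : Prop :=
  Z.Nonempty ∧ ∀ u ∈ Z, ∀ v ∈ Z,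
    Relation.ReflTransGen (fun a b => a ∈ Z ∧ b ∈ Z ∧ G.Adj a b) u v

/-- The whole curve is connected. -/
def Connected : Prop := G.ConnSub univ

/-- A tail: a proper subcurve `Z` with both `Z` and `Zᶜ` connected. -/
def IsTail (Z : Finset G.V) : Prop := Z ≠ univ ∧ G.ConnSub Z ∧ G.ConnSub Zᶜ

/-- A `m`-tail: a tail with `k_Z = m`. -/
def IsKTail (Z : Finset G.V) (m : ℕ) : Prop := G.IsTail Z ∧ G.k Z = m

/-- The node `e` lies on the component `v`. -/
def onComp (e : G.N) (v : G.V) : Prop := (G.ends e).1 = v ∨ (G.ends e).2 = v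

/-- The node `e`, as a point of the curve, lies on the subcurve `Z`. -/
def nodeOn (e : G.N) (Z : Finset G.V) : Prop := (G.ends e).1 ∈ Z ∨ (G.ends e).2 ∈ Z

/-- The subcurve `Z` crosses the node `e`: both branches of `e` lie in `Z`. -/
def crosses (Z : Finset G.V) (e : G.N) : Prop := (G.ends e).1 ∈ Z ∧ (G.ends e).2 ∈ Z

/-- `Z ≺ Z'`: strict inclusion with disjoint terminal points. -/
def prec (Z Z' : Finset G.V) : Prop := Z ⊂ Z' ∧ G.Term Z ∩ G.Term Z' = ∅

/-- The pair `(Z, Z')` is free: disjoint terminal points. -/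
def free (Z Z' : Finset G.V) : Prop := G.Term Z ∩ G.Term Z' = ∅

/-- The pair `(Z, Z')` is perfect. -/
def perfect (Z Z' : Finset G.V) : Prop := Z ⊆ Z' ∨ Z' ⊆ Z ∨ Zᶜ ⊆ Z' ∨ Z' ⊆ Zᶜ

/-- `T¹_γ`: the nested set of 1-tails containing `C_γ` and avoiding `σ(0)`. -/
def T1 (γ : G.V) : Set (Finset G.V) := { Z | G.IsKTail Z 1 ∧ γ ∈ Z ∧ G.base ∉ Z }

/-- The defining condition for the 2-tails entering `T²_{γ,γ'}`. -/
def cond2 (γ γ' : G.V) (Z : Finset G.V) : Prop :=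
  G.IsKTail Z 2 ∧ γ ∈ Z ∧ γ' ∈ Z ∧ G.base ∉ Z

/-- `W 0 ≺ W 1 ≺ ⋯ ≺ W (M-1)` is the nested set `T²_{γ,γ'}` of 2-tails:
each `W t` is minimal among the 2-tails `Z ⊇ C_γ ∪ C_γ'` with `σ(0) ∈ Zᶜ`
and `W (t-1) ≺ Z` (starting from `W_{-1} = ∅`), and the chain is maximal. -/
def IsNested2 (γ γ' : G.V) (M : ℕ) (W : ℕ → Finset G.V) : Prop :=
  (∀ t < M, Minimal (fun Z => G.cond2 γ γ' Z ∧ G.prec (if t = 0 then ∅ else W (t - 1)) Z) (W t)) ∧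
  ¬ ∃ Z, G.cond2 γ γ' Z ∧ G.prec (if M = 0 then ∅ else W (M - 1)) Z

/-- The set underlying a finite chain `W 0, …, W (M-1)`. -/
def chainSet (M : ℕ) (W : ℕ → Finset G.V) : Set (Finset G.V) := { Z | ∃ t < M, W t = Z }

/-- The defining condition for the 3-tails entering `T³_{γ,γ'}`:
3-tails that are moreover free with respect to every member of `T²_{γ,γ'}`. -/
def cond3 (γ γ' : G.V) (T2 : Set (Finset G.V)) (Z : Finset G.V) : Prop :=
  G.IsKTail Z 3 ∧ γ ∈ Z ∧ γ' ∈ Z ∧ G.base ∉ Z ∧ ∀ W ∈ T2, G.free Z W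

/-- `W 0 ≺ ⋯ ≺ W (M-1)` is the nested set `T³_{γ,γ'}` of 3-tails (relative to
the set `T2` of nested 2-tails). -/
def IsNested3 (γ γ' : G.V) (T2 : Set (Finset G.V)) (M : ℕ) (W : ℕ → Finset G.V) : Prop :=
  (∀ t < M, Minimal (fun Z => G.cond3 γ γ' T2 Z ∧ G.prec (if t = 0 then ∅ else W (t - 1)) Z) (W t)) ∧
  ¬ ∃ Z, G.cond3 γ γ' T2 Z ∧ G.prec (if M = 0 then ∅ else W (M - 1)) Z

end NodalGraph

namespace NodalGraph

variable (G : NodalGraph)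

/-- Number of nodes joining the components `m` and `n`. -/
def pairing (m n : G.V) : ℕ :=
  (Finset.univ.filter (fun e => G.ends e = (m, n) ∨ G.ends e = (n, m))).card

/-- Intersection number `C_n · C_m` on the regular total space of a smoothing:
`#(C_n ∩ C_m)` for `n ≠ m`, and `C_m · C_m = −Σ_{n ≠ m} C_n · C_m` (since
`C · C_m = 0`). -/
noncomputable def inter (n m : G.V) : ℤ :=
  if n = m then -(∑ l ∈ Finset.univ.erase m, (G.pairing l m : ℤ)) else (G.pairing n m : ℤ)

/-- The multidegree on `C` of `O_𝒞(Σ_n a_n C_n)|_C`: its degree on `C_m`. -/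
noncomputable def multideg (a : G.V → ℤ) (m : G.V) : ℤ :=
  ∑ n, a n * G.inter n m

open scoped Classical in
/-- The coefficient at `C_v` of the divisor `−Σ_{Z ∈ T_{i,k}} Z`, where
`T_{i,k} = T¹_i ⊔ T¹_k ⊔ T²_{i,k} ⊔ T³_{i,k}` (disjoint union, so tails are
counted with multiplicity). -/
noncomputable def tailCoeff (i k : G.V) (M2 M3 : ℕ) (W2 W3 : ℕ → Finset G.V)
    (v : G.V) : ℤ :=
  -( ((Finset.univ.filter (fun Z : Finset G.V => Z ∈ G.T1 i ∧ v ∈ Z)).card : ℤ)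
    + ((Finset.univ.filter (fun Z : Finset G.V => Z ∈ G.T1 k ∧ v ∈ Z)).card : ℤ)
    + (((Finset.range M2).filter (fun t => v ∈ W2 t)).card : ℤ)
    + (((Finset.range M3).filter (fun t => v ∈ W3 t)).card : ℤ))

end NodalGraph

/-!
Write the twisting divisor as `-∑ v, f v • C_v` with `f` vanishing on the base component.
Quasistability is a system of inequalities between `⟨f, 1_Y⟩` and `k_Y`, where `⟨·, ·⟩` is the
Dirichlet form of the dual graph, and a minimizer of a slightly perturbed Dirichlet energy solves
it. Such a solution is forced to be the sum of the nested tails: its jumps across separating nodes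
are determined by the degrees on the 1-tails; once these nodes are contracted it drops by exactly
one across each terminal point of a smallest subcurve containing `C_i ∪ C_k` with two terminal
points, so the indicator of this 2-tail can be subtracted and its terminal points contracted;
repeating this exhausts the 2-tails, then the 3-tails, and what remains is zero.

If `f` and `g` are the solutions for `(i, k)` and `(j, k)`, quasistability shows that every proper
nonempty superlevel set of `f - g` contains `i` and misses `j`. As `C_i` meets `C_j`, the difference
takes at most two, consecutive, values, and `Y` is the set where it takes the larger one.
-/

namespace NodalGraph

variable {G : NodalGraph}

/-! ### Terminal points and saturated subcurves -/

/-- The node `e` joins the components `u` and `v`; this hides the order of the pair `G.ends e`. -/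
def Joins (G : NodalGraph) (e : G.N) (u v : G.V) : Prop :=
  G.ends e = (u, v) ∨ G.ends e = (v, u)

lemma joins_ends (e : G.N) : G.Joins e (G.ends e).1 (G.ends e).2 := Or.inl rfl

lemma Joins.symm {e : G.N} {u v : G.V} (h : G.Joins e u v) : G.Joins e v u := Or.symm h

lemma joins_of_onComp {e : G.N} {u v : G.V} (huv : u ≠ v) (hu : G.onComp e u)
    (hv : G.onComp e v) : G.Joins e u v := by
  rcases hu with hu | hu <;> rcases hv with hv | hv
  · exact absurd (hu.symm.trans hv) huv
  · exact Or.inl (Prod.ext hu hv)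
  · exact Or.inr (Prod.ext hv hu)
  · exact absurd (hu.symm.trans hv) huv

lemma Joins.mem_Term_iff {e : G.N} {u v : G.V} (h : G.Joins e u v) {Y : Finset G.V} :
    e ∈ G.Term Y ↔ ¬(u ∈ Y ↔ v ∈ Y) := by
  rcases h with h | h <;> simp only [Term, mem_filter, mem_univ, true_and, h] <;> tauto

lemma mem_Term_iff {e : G.N} {Y : Finset G.V} :
    e ∈ G.Term Y ↔ ¬((G.ends e).1 ∈ Y ↔ (G.ends e).2 ∈ Y) :=
  (joins_ends e).mem_Term_iff

lemma mem_Term_iff_exists_joins {e : G.N} {Y : Finset G.V} :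
    e ∈ G.Term Y ↔ ∃ u ∈ Y, ∃ v ∉ Y, G.Joins e u v := by
  refine ⟨fun he => ?_, fun ⟨u, hu, v, hv, h⟩ => h.mem_Term_iff.2 (by tauto)⟩
  rw [mem_Term_iff] at he
  by_cases h : (G.ends e).1 ∈ Y
  · exact ⟨_, h, _, by tauto, joins_ends e⟩
  · exact ⟨_, by tauto, _, h, (joins_ends e).symm⟩

lemma Joins.eq_and_eq {e : G.N} {Y : Finset G.V} {u v u' v' : G.V} (h : G.Joins e u v)
    (h' : G.Joins e u' v') (hu : u ∈ Y) (hv' : v' ∉ Y) : u = u' ∧ v = v' := by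
  rcases h with h | h <;> rcases h' with h' | h' <;> simp_all

lemma Term_empty : G.Term ∅ = ∅ := by
  ext e; simp [mem_Term_iff]

lemma Term_compl (Y : Finset G.V) : G.Term Yᶜ = G.Term Y := by
  ext e; simp only [mem_Term_iff, mem_compl]; tauto

lemma k_compl (Y : Finset G.V) : G.k Yᶜ = G.k Y := congrArg card (Term_compl Y)

lemma Term_inter_Term_subset {A B C : Finset G.V} (hAB : A ⊆ B) (hBC : B ⊆ C) :
    G.Term A ∩ G.Term C ⊆ G.Term B := by
  intro e he
  simp only [mem_inter, mem_Term_iff] at he ⊢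
  have := @hAB (G.ends e).1
  have := @hAB (G.ends e).2
  have := @hBC (G.ends e).1
  have := @hBC (G.ends e).2
  tauto

lemma ConnSub.mem_iff_mem {S B : Finset G.V} (hS : G.ConnSub S)
    (h : ∀ e, ∀ u ∈ S, ∀ v ∈ S, G.Joins e u v → e ∉ G.Term B) {u v : G.V} (hu : u ∈ S)
    (hv : v ∈ S) : u ∈ B ↔ v ∈ B := by
  induction hS.2 u hu v hv with
  | refl => rfl
  | @tail b c _ hbc ih =>
    obtain ⟨hb, hc, e, he : G.Joins e b c⟩ := hbc
    exact (ih hb).trans (not_not.1 (he.mem_Term_iff.not.1 (h e b hb c hc he)))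

lemma Term_nonempty (hG : G.Connected) {Y : Finset G.V} (hne : Y.Nonempty) (huniv : Y ≠ univ) :
    (G.Term Y).Nonempty := by
  obtain ⟨u, hu⟩ := hne
  by_contra hT
  rw [not_nonempty_iff_eq_empty] at hT
  refine huniv (eq_univ_iff_forall.2 fun v => ?_)
  exact (hG.mem_iff_mem (fun e _ _ _ _ _ => by simp [hT]) (mem_univ u) (mem_univ v)).1 hu

lemma k_pos (hG : G.Connected) {Y : Finset G.V} (hne : Y.Nonempty) (huniv : Y ≠ univ) :
    1 ≤ G.k Y :=
  card_pos.2 (Term_nonempty hG hne huniv)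

lemma eq_of_Term_eq (hG : G.Connected) {Y Z : Finset G.V} (h : G.Term Y = G.Term Z)
    (hY : G.base ∉ Y) (hZ : G.base ∉ Z) : Y = Z := by
  have hiff : ∀ v, G.base ∈ symmDiff Y Z ↔ v ∈ symmDiff Y Z := fun v => by
    refine hG.mem_iff_mem (fun e u _ v _ he => ?_) (mem_univ _) (mem_univ v)
    have := Finset.ext_iff.1 h e
    simp only [he.mem_Term_iff, mem_symmDiff] at this ⊢
    tauto
  ext v
  have := hiff v
  simp only [mem_symmDiff] at this
  tauto

lemma ne_univ_of_notMem {Y : Finset G.V} {v : G.V} (h : v ∉ Y) : Y ≠ univ := by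
  rintro rfl; exact h (mem_univ v)

lemma Term_eq_singleton {Z : Finset G.V} {e : G.N} (hk : G.k Z = 1) (he : e ∈ G.Term Z) :
    G.Term Z = {e} := by
  obtain ⟨e', he'⟩ := card_eq_one.1 hk
  rw [he', mem_singleton] at he
  rw [he', he]

/-- `Y` is a union of components of the curve obtained by contracting the nodes of `F`: the two
branches of a node of `F` both lie on `Y` or both off it. Cutting along a tail amounts to enlarging
`F`, after which only subcurves free with respect to that tail are considered. -/
def Saturated (G : NodalGraph) (F : Set G.N) (Y : Finset G.V) : Prop :=
  ∀ e ∈ F, ((G.ends e).1 ∈ Y ↔ (G.ends e).2 ∈ Y)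

lemma Saturated.notMem_Term {F : Set G.N} {Y : Finset G.V} (h : G.Saturated F Y) {e : G.N}
    (he : e ∈ F) : e ∉ G.Term Y :=
  fun hT => mem_Term_iff.1 hT (h e he)

lemma saturated_iff {F : Set G.N} {Y : Finset G.V} :
    G.Saturated F Y ↔ ∀ e ∈ F, e ∉ G.Term Y :=
  forall₂_congr fun _ _ => by rw [mem_Term_iff, not_not]

lemma saturated_empty (Y : Finset G.V) : G.Saturated ∅ Y := fun _ he => he.elim

lemma Saturated.mono {F F' : Set G.N} {Y : Finset G.V} (h : G.Saturated F' Y) (hF : F ⊆ F') :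
    G.Saturated F Y :=
  fun e he => h e (hF he)

lemma Saturated.inter {F : Set G.N} {A B : Finset G.V} (hA : G.Saturated F A)
    (hB : G.Saturated F B) : G.Saturated F (A ∩ B) :=
  fun e he => by simp only [mem_inter, hA e he, hB e he]

lemma Saturated.union {F : Set G.N} {A B : Finset G.V} (hA : G.Saturated F A)
    (hB : G.Saturated F B) : G.Saturated F (A ∪ B) :=
  fun e he => by simp only [mem_union, hA e he, hB e he]

lemma Saturated.sdiff {F : Set G.N} {A B : Finset G.V} (hA : G.Saturated F A)
    (hB : G.Saturated F B) : G.Saturated F (A \ B) :=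
  fun e he => by simp only [mem_sdiff, hA e he, hB e he]

lemma Saturated.compl {F : Set G.N} {A : Finset G.V} (hA : G.Saturated F A) :
    G.Saturated F Aᶜ :=
  fun e he => by simp only [mem_compl, hA e he]

lemma k_add_k_sdiff {A S : Finset G.V} (hAS : A ⊆ S)
    (h : ∀ e, ∀ u ∈ A, ∀ v ∈ S, G.Joins e u v → v ∈ A) : G.k A + G.k (S \ A) = G.k S := by
  have hends : ∀ e, ((G.ends e).1 ∈ A → (G.ends e).1 ∈ S) ∧ ((G.ends e).2 ∈ A → (G.ends e).2 ∈ S) ∧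
      ((G.ends e).1 ∈ A → (G.ends e).2 ∈ S → (G.ends e).2 ∈ A) ∧
      ((G.ends e).2 ∈ A → (G.ends e).1 ∈ S → (G.ends e).1 ∈ A) := fun e =>
    ⟨@hAS _, @hAS _, fun h1 h2 => h e _ h1 _ h2 (joins_ends e),
      fun h2 h1 => h e _ h2 _ h1 (joins_ends e).symm⟩
  have hdisj : Disjoint (G.Term A) (G.Term (S \ A)) := disjoint_left.2 fun e => by
    have := hends e
    simp only [mem_Term_iff, mem_sdiff]; tauto
  have hunion : G.Term A ∪ G.Term (S \ A) = G.Term S := by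
    ext e
    have := hends e
    simp only [mem_union, mem_Term_iff, mem_sdiff]; tauto
  rw [k, k, k, ← card_union_of_disjoint hdisj, hunion]

lemma connSub_of_k_lt {F : Set G.N} {c : ℕ}
    (hF : ∀ Y, G.Saturated F Y → Y.Nonempty → Y ≠ univ → c ≤ G.k Y) {S : Finset G.V}
    (hne : S.Nonempty) (hS : G.Saturated F S) (hk : G.k S < 2 * c) : G.ConnSub S := by
  classical
  refine ⟨hne, fun u hu => ?_⟩
  set A := S.filter fun v =>
    Relation.ReflTransGen (fun a b => a ∈ S ∧ b ∈ S ∧ G.Adj a b) u v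
  have hAS : A ⊆ S := filter_subset _ _
  have huA : u ∈ A := mem_filter.2 ⟨hu, .refl⟩
  have hclosed : ∀ e, ∀ a ∈ A, ∀ b ∈ S, G.Joins e a b → b ∈ A := fun e a ha b hb he =>
    mem_filter.2 ⟨hb, (mem_filter.1 ha).2.tail ⟨hAS ha, hb, e, he⟩⟩
  have hA : G.Saturated F A := fun e he =>
    ⟨fun h => hclosed e _ h _ ((hS e he).1 (hAS h)) (joins_ends e),
      fun h => hclosed e _ h _ ((hS e he).2 (hAS h)) (joins_ends e).symm⟩
  suffices hSA : S ⊆ A from fun v hv => (mem_filter.1 (hSA hv)).2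
  by_contra hSA
  obtain ⟨w, hw⟩ := sdiff_nonempty.2 hSA
  have hkA := hF A hA ⟨u, huA⟩ (ne_univ_of_notMem (mem_sdiff.1 hw).2)
  have hkSA := hF (S \ A) (hS.sdiff hA) ⟨w, hw⟩
    (ne_univ_of_notMem (v := u) fun h => (mem_sdiff.1 h).2 huA)
  have := k_add_k_sdiff hAS hclosed
  omega

lemma isTail_of_k_lt {F : Set G.N} {c : ℕ}
    (hF : ∀ Y, G.Saturated F Y → Y.Nonempty → Y ≠ univ → c ≤ G.k Y) {S : Finset G.V}
    (hne : S.Nonempty) (huniv : S ≠ univ) (hS : G.Saturated F S) (hk : G.k S < 2 * c) :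
    G.IsTail S :=
  ⟨huniv, connSub_of_k_lt hF hne hS hk, connSub_of_k_lt hF
    (nonempty_iff_ne_empty.2 fun h => huniv ((compl_eq_empty_iff S).1 h)) hS.compl
    (by rwa [k_compl])⟩

lemma isKTail_one_iff (hG : G.Connected) {Z : Finset G.V} (hne : Z.Nonempty) :
    G.IsKTail Z 1 ↔ Z ≠ univ ∧ G.k Z = 1 :=
  ⟨fun h => ⟨h.1.1, h.2⟩, fun h => ⟨isTail_of_k_lt (fun _ _ => k_pos hG) hne h.1
    (saturated_empty Z) (by omega), h.2⟩⟩

/-- The separating nodes. -/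
def bridges (G : NodalGraph) : Set G.N := {e | ∃ Z, G.Term Z = {e}}

/-- Contracting the nodes of `F` leaves a curve without separating nodes. -/
def BridgelessMod (G : NodalGraph) (F : Set G.N) : Prop :=
  ∀ Y, G.Saturated F Y → Y.Nonempty → Y ≠ univ → 2 ≤ G.k Y

lemma BridgelessMod.mono {F F' : Set G.N} (h : G.BridgelessMod F) (hF : F ⊆ F') :
    G.BridgelessMod F' :=
  fun Y hY => h Y (hY.mono hF)

lemma bridgelessMod_bridges (hG : G.Connected) : G.BridgelessMod G.bridges := by
  intro Y hY hne huniv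
  have hk : G.k Y ≠ 1 := fun h => by
    obtain ⟨e, he⟩ := card_eq_one.1 h
    exact hY.notMem_Term ⟨Y, he⟩ (he ▸ mem_singleton_self e)
  have := k_pos hG hne huniv
  omega

lemma IsTail.saturated_bridges {Z : Finset G.V} (hZ : G.IsTail Z) (hk : 2 ≤ G.k Z) :
    G.Saturated G.bridges Z := by
  refine saturated_iff.2 fun e ⟨B, hB⟩ heZ => ?_
  -- `Z` and `Zᶜ` are connected without `e`, so `B` cannot split either of them
  have hout : ∀ S : Finset G.V, G.Term S = G.Term Z → ∀ e', ∀ u ∈ S, ∀ v ∈ S, G.Joins e' u v →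
      e' ∉ G.Term B := fun S hS e' u hu v hv he' h => by
    obtain rfl : e' = e := by simpa [hB] using h
    exact he'.mem_Term_iff.1 (hS ▸ heZ) (iff_of_true hu hv)
  obtain ⟨u, hu, v, hv, he⟩ := mem_Term_iff_exists_joins.1 heZ
  have heB : e ∈ G.Term B := hB ▸ mem_singleton_self e
  have hsub : G.Term Z ⊆ G.Term B := fun e' he'Z => by
    obtain ⟨u', hu', v', hv', he'⟩ := mem_Term_iff_exists_joins.1 he'Z
    rw [he'.mem_Term_iff, ← hZ.2.1.mem_iff_mem (hout Z rfl) hu hu',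
      ← hZ.2.2.mem_iff_mem (hout Zᶜ (Term_compl Z)) (mem_compl.2 hv) (mem_compl.2 hv')]
    exact he.mem_Term_iff.1 heB
  have := card_le_card hsub
  rw [hB, card_singleton] at this
  exact absurd (hk.trans this) (by norm_num)


/-! ### The Dirichlet form and superlevel sets -/

/-- The difference of `f` across the node `e`, in the order of the pair `G.ends e`. -/
def slope (G : NodalGraph) (e : G.N) : (G.V → ℤ) →ₗ[ℤ] ℤ :=
  LinearMap.proj (R := ℤ) (φ := fun _ => ℤ) (G.ends e).1 - LinearMap.proj (G.ends e).2

/-- The Dirichlet form of the dual graph: minus the intersection product of the divisors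
`∑ v, f v • C_v` and `∑ v, g v • C_v` on the total space of the smoothing. -/
def dirichlet (G : NodalGraph) : LinearMap.BilinForm ℤ (G.V → ℤ) :=
  ∑ e, (LinearMap.mul ℤ ℤ).compl₁₂ (G.slope e) (G.slope e)

/-- The coefficient function of the reduced divisor `∑ v ∈ Y, C_v`. -/
def ind (G : NodalGraph) (Y : Finset G.V) : G.V → ℤ := fun v => if v ∈ Y then 1 else 0

lemma slope_apply (e : G.N) (f : G.V → ℤ) :
    G.slope e f = f (G.ends e).1 - f (G.ends e).2 := rfl

lemma dirichlet_apply (f g : G.V → ℤ) :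
    G.dirichlet f g = ∑ e, G.slope e f * G.slope e g := by
  simp [dirichlet]

lemma dirichlet_comm (f g : G.V → ℤ) : G.dirichlet f g = G.dirichlet g f := by
  simp only [dirichlet_apply, mul_comm]

lemma Joins.slope_mul_slope {e : G.N} {u v : G.V} (h : G.Joins e u v) (f g : G.V → ℤ) :
    G.slope e f * G.slope e g = (f u - f v) * (g u - g v) := by
  rcases h with h | h <;> simp only [slope_apply, h]
  ring

lemma Joins.slope_eq_slope {e : G.N} {u v : G.V} (h : G.Joins e u v) {f g : G.V → ℤ}
    (hfg : f u - f v = g u - g v) : G.slope e f = G.slope e g := by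
  rcases h with h | h <;> simp only [slope_apply, h] <;> omega

lemma ind_of_mem {Y : Finset G.V} {v : G.V} (h : v ∈ Y) : G.ind Y v = 1 := if_pos h

lemma ind_of_notMem {Y : Finset G.V} {v : G.V} (h : v ∉ Y) : G.ind Y v = 0 := if_neg h

lemma sum_mul_ind (a : G.V → ℤ) (Y : Finset G.V) : ∑ v, a v * G.ind Y v = ∑ v ∈ Y, a v := by
  simp [ind]

lemma ind_compl (Y : Finset G.V) : G.ind Yᶜ = 1 - G.ind Y := by
  ext v; by_cases h : v ∈ Y <;> simp [ind, h]

lemma slope_ind_eq_zero {e : G.N} {Y : Finset G.V} (h : e ∉ G.Term Y) :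
    G.slope e (G.ind Y) = 0 := by
  rw [mem_Term_iff, not_not] at h
  simp only [slope_apply, ind, h, sub_self]

lemma Saturated.slope_ind {F : Set G.N} {Y : Finset G.V} (h : G.Saturated F Y) {e : G.N}
    (he : e ∈ F) : G.slope e (G.ind Y) = 0 :=
  slope_ind_eq_zero (h.notMem_Term he)

lemma slope_ind_sq (e : G.N) (Y : Finset G.V) :
    G.slope e (G.ind Y) * G.slope e (G.ind Y) = if e ∈ G.Term Y then 1 else 0 := by
  simp only [mem_Term_iff, slope_apply, ind]
  by_cases h₁ : (G.ends e).1 ∈ Y <;> by_cases h₂ : (G.ends e).2 ∈ Y <;> simp [h₁, h₂]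

lemma k_eq_sum (Y : Finset G.V) : (G.k Y : ℤ) = ∑ e, if e ∈ G.Term Y then 1 else 0 := by
  simp [k]

lemma dirichlet_ind_ind (Y : Finset G.V) : G.dirichlet (G.ind Y) (G.ind Y) = G.k Y := by
  simp only [dirichlet_apply, slope_ind_sq, k_eq_sum]

lemma dirichlet_ind_compl (f : G.V → ℤ) (Y : Finset G.V) :
    G.dirichlet f (G.ind Yᶜ) = -G.dirichlet f (G.ind Y) := by
  have h1 : G.dirichlet f 1 = 0 := by simp [dirichlet_apply, slope_apply]
  rw [ind_compl, map_sub, h1, zero_sub]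

lemma k_inter_add_k_union_le (A B : Finset G.V) :
    G.k (A ∩ B) + G.k (A ∪ B) ≤ G.k A + G.k B := by
  simp only [k]
  rw [← card_union_add_card_inter, ← card_union_add_card_inter (G.Term A)]
  refine add_le_add (card_le_card fun e => ?_) (card_le_card fun e => ?_) <;>
  · simp only [mem_union, mem_inter, mem_Term_iff]
    tauto

/-- The subcurve of the components on which `f` is at least `s`. -/
def superlevel (f : G.V → ℤ) (s : ℤ) : Finset G.V := univ.filter (s ≤ f ·)

lemma mem_superlevel {f : G.V → ℤ} {s : ℤ} {v : G.V} : v ∈ superlevel f s ↔ s ≤ f v := by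
  simp [superlevel]

lemma superlevel_neg (f : G.V → ℤ) (s : ℤ) :
    superlevel (-f) (1 - s) = (superlevel f s)ᶜ := by
  ext v
  simp only [mem_superlevel, mem_compl, Pi.neg_apply]
  omega

lemma saturated_superlevel {F : Set G.N} {f : G.V → ℤ} (h : ∀ e ∈ F, G.slope e f = 0) (s : ℤ) :
    G.Saturated F (superlevel f s) := fun e he => by
  rw [mem_superlevel, mem_superlevel, sub_eq_zero.1 ((slope_apply e f).symm.trans (h e he))]

lemma slope_ind_superlevel_sq_le (f : G.V → ℤ) (s : ℤ) (e : G.N) :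
    G.slope e (G.ind (superlevel f s)) * G.slope e (G.ind (superlevel f s)) ≤
      G.slope e f * G.slope e (G.ind (superlevel f s)) := by
  simp only [slope_apply, ind, mem_superlevel]
  split_ifs <;> linarith

lemma k_superlevel_le (f : G.V → ℤ) (s : ℤ) :
    (G.k (superlevel f s) : ℤ) ≤ G.dirichlet f (G.ind (superlevel f s)) := by
  rw [← dirichlet_ind_ind, dirichlet_apply, dirichlet_apply]
  exact sum_le_sum fun e _ => slope_ind_superlevel_sq_le f s e

lemma k_superlevel_add_le {f : G.V → ℤ} {s : ℤ} {e : G.N} {u v : G.V} (he : G.Joins e u v)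
    (hu : s ≤ f u) (hv : f v < s) :
    G.k (superlevel f s) + (f u - f v) ≤ G.dirichlet f (G.ind (superlevel f s)) + 1 := by
  have hle := single_le_sum
    (fun e _ => sub_nonneg.2 (slope_ind_superlevel_sq_le f s e)) (mem_univ e)
  rw [sum_sub_distrib, ← dirichlet_apply, ← dirichlet_apply, dirichlet_ind_ind,
    he.slope_mul_slope, he.slope_mul_slope, ind_of_mem (mem_superlevel.2 hu),
    ind_of_notMem (by simpa [mem_superlevel] using hv)] at hle
  linarith

lemma k_sdiff_add_k_union_le {f : G.V → ℤ} {s : ℤ} {U : Finset G.V}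
    (h : ∀ e, ∀ u ∈ U, ∀ v ∈ superlevel f s \ U, G.Joins e u v → f u ≤ f v) :
    (G.k (superlevel f s \ U) + G.k (U ∪ superlevel f s) : ℤ) ≤
      G.k U + 2 * G.dirichlet f (G.ind (superlevel f s \ U)) := by
  simp only [k_eq_sum, dirichlet_apply, mul_sum, ← sum_add_distrib]
  refine sum_le_sum fun e _ => ?_
  have h₁ := h e (G.ends e).1
  have h₂ := h e (G.ends e).2
  have hj := joins_ends e
  have hj' := (joins_ends e).symm
  simp only [mem_Term_iff, slope_apply, ind, mem_sdiff, mem_union, mem_superlevel] at h₁ h₂ ⊢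
  by_cases hu : (G.ends e).1 ∈ U <;> by_cases hv : (G.ends e).2 ∈ U <;> grind

lemma k_sdiff_add_k_inter_le {f : G.V → ℤ} {s : ℤ} {U : Finset G.V}
    (h : ∀ e, ∀ u ∈ U \ superlevel f s, ∀ v ∉ U, G.Joins e u v → f u ≤ f v) :
    G.k (U \ superlevel f s) + 2 * G.dirichlet f (G.ind (U \ superlevel f s)) +
      G.k (U ∩ superlevel f s) ≤ (G.k U : ℤ) := by
  have hsdiff : superlevel (-f) (1 - s) \ Uᶜ = U \ superlevel f s := by
    ext v; simp [superlevel_neg, and_comm]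
  have hunion : Uᶜ ∪ superlevel (-f) (1 - s) = (U ∩ superlevel f s)ᶜ := by
    rw [superlevel_neg, compl_inter]
  have := k_sdiff_add_k_union_le (f := -f) (s := 1 - s) (U := Uᶜ) fun e v hv u hu he =>
    neg_le_neg (h e u (hsdiff ▸ hu) v (mem_compl.1 hv) he.symm)
  rw [hsdiff, hunion, k_compl, k_compl, map_neg, LinearMap.neg_apply] at this
  linarith

/-! ### Quasistable functions -/

lemma exists_abs_sub_base_le (hG : G.Connected) (v : G.V) :
    ∃ C : ℤ, ∀ f : G.V → ℤ, |f v - f G.base| ≤ C * ∑ e, |G.slope e f| := by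
  induction hG.2 G.base (mem_univ _) v (mem_univ _) with
  | refl => exact ⟨0, fun f => by simp⟩
  | @tail b c _ hbc ih =>
    obtain ⟨C, hC⟩ := ih
    obtain ⟨-, -, e, he : G.Joins e b c⟩ := hbc
    refine ⟨C + 1, fun f => ?_⟩
    have hedge : |f c - f b| ≤ ∑ e, |G.slope e f| := calc
      |f c - f b| = |G.slope e f| := by
        rcases he with he | he <;> simp only [slope_apply, he]
        exact abs_sub_comm _ _
      _ ≤ ∑ e, |G.slope e f| :=
        single_le_sum (f := fun e => |G.slope e f|) (fun e _ => abs_nonneg _) (mem_univ e)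
    have := abs_sub_le (f c) (f b) (f G.base)
    linarith [hC f]

lemma exists_le_dirichlet_sub_sum (hG : G.Connected) {n : ℤ} (hn : 1 ≤ n) (a : G.V → ℤ) :
    ∃ B : ℤ, ∀ f : G.V → ℤ, f G.base = 0 → B ≤ n * G.dirichlet f f - ∑ v, a v * f v := by
  choose C hC using exists_abs_sub_base_le hG
  refine ⟨∑ _e : G.N, -(∑ v, |a v| * C v) ^ 2, fun f hf => ?_⟩
  set K := ∑ v, |a v| * C v
  have hsum : ∑ v, a v * f v ≤ K * ∑ e, |G.slope e f| := by
    rw [sum_mul]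
    refine sum_le_sum fun v _ => ?_
    calc a v * f v ≤ |a v| * |f v| := (le_abs_self _).trans (abs_mul _ _).le
      _ ≤ |a v| * (C v * ∑ e, |G.slope e f|) :=
        mul_le_mul_of_nonneg_left (by simpa [hf] using hC v f) (abs_nonneg _)
      _ = |a v| * C v * ∑ e, |G.slope e f| := (mul_assoc _ _ _).symm
  refine le_trans ?_ (sub_le_sub_left hsum _)
  rw [dirichlet_apply, mul_sum, mul_sum, ← sum_sub_distrib]
  refine sum_le_sum fun e _ => ?_
  rw [← abs_mul_abs_self]
  nlinarith [sq_nonneg (2 * |G.slope e f| - K), sq_nonneg K, sq_nonneg |G.slope e f|]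

lemma exists_forall_energy_le (hG : G.Connected) {n : ℤ} (hn : 1 ≤ n) (a : G.V → ℤ) :
    ∃ f : G.V → ℤ, f G.base = 0 ∧ ∀ g : G.V → ℤ, g G.base = 0 →
      n * G.dirichlet f f - ∑ v, a v * f v ≤ n * G.dirichlet g g - ∑ v, a v * g v := by
  obtain ⟨B, hB⟩ := exists_le_dirichlet_sub_sum hG hn a
  obtain ⟨_, ⟨f, hf, rfl⟩, hmin⟩ := Int.exists_least_of_bdd
    (P := fun z => ∃ f : G.V → ℤ, f G.base = 0 ∧ n * G.dirichlet f f - ∑ v, a v * f v = z)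
    ⟨B, by rintro _ ⟨f, hf, rfl⟩; exact hB f hf⟩ ⟨_, 0, rfl, rfl⟩
  exact ⟨f, hf, fun g hg => hmin _ ⟨g, hg, rfl⟩⟩

/-- The degree on `Y` of `O_𝒞(-∑ v, f v • C_v) ⊗ O_𝒞(-D)`, where `D v` is the degree of `D` on
`C_v`. On subcurves that avoid the base component, twisting by a multiple of `σ(0)` has no
effect. -/
def twistDeg (G : NodalGraph) (D f : G.V → ℤ) (Y : Finset G.V) : ℤ :=
  G.dirichlet f (G.ind Y) - ∑ v ∈ Y, D v

/-- The twist of `O_𝒞(d • σ(0) - D)`, where `d = deg D`, by `-∑ v, f v • C_v` satisfies the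
`σ(0)`-quasistability inequalities on the saturated subcurves, and `f`, normalized to vanish on the
base component, is constant across the nodes of `F`. The inequalities are imposed off `σ(0)` only,
those through `σ(0)` being equivalent to them by passing to complements. -/
structure IsQuasistable (G : NodalGraph) (D : G.V → ℤ) (F : Set G.N) (f : G.V → ℤ) : Prop where
  base_eq_zero : f G.base = 0
  slope_eq_zero : ∀ e ∈ F, G.slope e f = 0
  neg_k_le : ∀ Y, G.base ∉ Y → G.Saturated F Y → -(G.k Y : ℤ) ≤ 2 * G.twistDeg D f Y
  lt_k : ∀ Y, G.base ∉ Y → G.Saturated F Y → Y.Nonempty → 2 * G.twistDeg D f Y < G.k Y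

lemma exists_isQuasistable (hG : G.Connected) (D : G.V → ℤ) : ∃ f, G.IsQuasistable D ∅ f := by
  set n : ℤ := Fintype.card G.V + 1
  have hn : 1 ≤ n := by omega
  -- `-1` is the perturbation that turns semistability into quasistability
  obtain ⟨f, hf, hmin⟩ := exists_forall_energy_le hG hn fun v => 2 * n * D v - 1
  have hsum : ∀ Y, ∑ v, (2 * n * D v - 1) * G.ind Y v = 2 * n * ∑ v ∈ Y, D v - #Y := fun Y => by
    rw [sum_mul_ind, sum_sub_distrib, ← mul_sum]
    simp
  have hadd : ∀ Y, G.base ∉ Y → 0 ≤ n * (2 * G.twistDeg D f Y + G.k Y) + #Y := fun Y hY => by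
    have h := hmin (f + G.ind Y) (by simp [hf, ind_of_notMem hY])
    simp only [map_add, LinearMap.add_apply, dirichlet_ind_ind, dirichlet_comm (G.ind Y),
      Pi.add_apply, mul_add, sum_add_distrib, hsum] at h
    rw [twistDeg]
    linarith
  have hsub : ∀ Y, G.base ∉ Y → 0 ≤ n * (G.k Y - 2 * G.twistDeg D f Y) - #Y := fun Y hY => by
    have h := hmin (f - G.ind Y) (by simp [hf, ind_of_notMem hY])
    simp only [map_sub, LinearMap.sub_apply, dirichlet_ind_ind, dirichlet_comm (G.ind Y),
      Pi.sub_apply, mul_sub, sum_sub_distrib, hsum] at h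
    rw [twistDeg]
    linarith
  refine ⟨f, hf, fun e he => he.elim, fun Y hY _ => ?_, fun Y hY _ hne => ?_⟩
  · have : (#Y : ℤ) < n := Int.lt_add_one_of_le (by exact_mod_cast card_le_univ Y)
    by_contra! hlt
    nlinarith [hadd Y hY]
  · have : (0 : ℤ) < #Y := by exact_mod_cast hne.card_pos
    by_contra! hle
    nlinarith [hsub Y hY]

namespace IsQuasistable

variable {D f : G.V → ℤ} {F : Set G.N}

lemma sub (hf : G.IsQuasistable D F f) {F' : Set G.N} (hF : F ⊆ F') {g : G.V → ℤ}
    (hg : g G.base = 0) (heq : ∀ e ∈ F', G.slope e f = G.slope e g)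
    (hzero : ∀ e ∉ F', G.slope e g = 0) : G.IsQuasistable D F' (f - g) := by
  have htwist : ∀ Y, G.Saturated F' Y → G.twistDeg D (f - g) Y = G.twistDeg D f Y := by
    intro Y hY
    have h0 : G.dirichlet g (G.ind Y) = 0 := by
      rw [dirichlet_apply]
      refine sum_eq_zero fun e _ => ?_
      by_cases he : e ∈ F'
      · rw [hY.slope_ind he, mul_zero]
      · rw [hzero e he, zero_mul]
    rw [twistDeg, map_sub, LinearMap.sub_apply, h0, sub_zero, twistDeg]
  refine ⟨by simp [hf.base_eq_zero, hg], fun e he => by rw [map_sub, heq e he, sub_self],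
    fun Y hb hY => ?_, fun Y hb hY => ?_⟩
  · exact htwist Y hY ▸ hf.neg_k_le Y hb (hY.mono hF)
  · exact htwist Y hY ▸ hf.lt_k Y hb (hY.mono hF)

lemma nonneg (hf : G.IsQuasistable D F f) (hD : 0 ≤ D) (hF : G.BridgelessMod F) (v : G.V) :
    0 ≤ f v := by
  by_contra! hlt
  set L := superlevel (-f) 1
  have hv : v ∈ L := mem_superlevel.2 (by rw [Pi.neg_apply]; omega)
  have hb : G.base ∉ L := by simp [L, mem_superlevel, hf.base_eq_zero]
  have hL : G.Saturated F L := saturated_superlevel (fun e he => by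
    rw [map_neg, hf.slope_eq_zero e he, neg_zero]) 1
  have hkL : (G.k L : ℤ) ≤ G.dirichlet (-f) (G.ind L) := k_superlevel_le (-f) 1
  have hle := hf.neg_k_le L hb hL
  have hk := hF L hL ⟨v, hv⟩ (ne_univ_of_notMem hb)
  have hDL : 0 ≤ ∑ v ∈ L, D v := sum_nonneg fun v _ => hD v
  rw [map_neg, LinearMap.neg_apply] at hkL
  rw [twistDeg] at hle
  omega

end IsQuasistable

/-- The part of a quasistable function that jumps across separating nodes: each 1-tail `Z` off the
base is weighted by the degree of `D` on `Z`. -/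
def bridgeTwist (G : NodalGraph) (D : G.V → ℤ) : G.V → ℤ :=
  ∑ Z with G.k Z = 1 ∧ G.base ∉ Z, (∑ v ∈ Z, D v) • G.ind Z

lemma exists_tail_of_mem_bridges {e : G.N} (he : e ∈ G.bridges) :
    ∃ Z, G.base ∉ Z ∧ G.Term Z = {e} := by
  obtain ⟨Z, hZ⟩ := he
  by_cases hb : G.base ∈ Z
  · exact ⟨Zᶜ, by simpa using hb, by rw [Term_compl, hZ]⟩
  · exact ⟨Z, hb, hZ⟩

lemma slope_bridgeTwist (hG : G.Connected) (D : G.V → ℤ) {e : G.N} {Z : Finset G.V}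
    (hb : G.base ∉ Z) (hZ : G.Term Z = {e}) :
    G.slope e (G.bridgeTwist D) = (∑ v ∈ Z, D v) * G.slope e (G.ind Z) := by
  rw [bridgeTwist, map_sum, sum_eq_single_of_mem Z]
  · rw [map_smul, smul_eq_mul]
  · exact mem_filter.2 ⟨mem_univ Z, by rw [k, hZ, card_singleton], hb⟩
  · intro Z' hZ' hne
    obtain ⟨-, hk, hb'⟩ := mem_filter.1 hZ'
    rw [map_smul, slope_ind_eq_zero, smul_zero]
    exact fun he => hne (eq_of_Term_eq hG ((Term_eq_singleton hk he).trans hZ.symm) hb' hb)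

lemma IsQuasistable.slope_eq_of_Term_eq {D f : G.V → ℤ} (hf : G.IsQuasistable D ∅ f) {e : G.N}
    {Z : Finset G.V} (hb : G.base ∉ Z) (hZ : G.Term Z = {e}) :
    G.slope e f = (∑ v ∈ Z, D v) * G.slope e (G.ind Z) := by
  obtain ⟨u, hu, v, hv, he⟩ := mem_Term_iff_exists_joins.1 (hZ ▸ mem_singleton_self e)
  have hle := hf.neg_k_le Z hb (saturated_empty Z)
  have hlt := hf.lt_k Z hb (saturated_empty Z) ⟨u, hu⟩
  have hdir : G.dirichlet f (G.ind Z) = f u - f v := by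
    rw [dirichlet_apply, sum_eq_single_of_mem e (mem_univ e), he.slope_mul_slope, ind_of_mem hu,
      ind_of_notMem hv, sub_zero, mul_one]
    exact fun e' _ hne => by rw [slope_ind_eq_zero (by simpa [hZ] using hne), mul_zero]
  have hdrop : f u - f v = ∑ v ∈ Z, D v := by
    rw [twistDeg, hdir, k, hZ, card_singleton] at hle hlt
    omega
  rw [← smul_eq_mul, ← map_smul]
  exact he.slope_eq_slope (by simp [ind_of_mem hu, ind_of_notMem hv, hdrop])

lemma IsQuasistable.sub_bridgeTwist (hG : G.Connected) {D f : G.V → ℤ}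
    (hf : G.IsQuasistable D ∅ f) : G.IsQuasistable D G.bridges (f - G.bridgeTwist D) := by
  refine hf.sub (Set.empty_subset _) ?_ (fun e he => ?_) (fun e he => ?_)
  · rw [bridgeTwist, Finset.sum_apply]
    exact sum_eq_zero fun Z hZ => by simp [ind_of_notMem (mem_filter.1 hZ).2.2]
  · obtain ⟨Z, hb, hZ⟩ := exists_tail_of_mem_bridges he
    rw [hf.slope_eq_of_Term_eq hb hZ, slope_bridgeTwist hG D hb hZ]
  · rw [bridgeTwist, map_sum]
    refine sum_eq_zero fun Z hZ => ?_
    obtain ⟨-, hk, -⟩ := mem_filter.1 hZ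
    rw [map_smul, slope_ind_eq_zero fun heZ => he ⟨Z, Term_eq_singleton hk heZ⟩, smul_zero]

/-! ### Two marked points -/

/-- The multidegree of `Q_i + Q_l`, for smooth points `Q_i` of `C_i` and `Q_l` of `C_l`. -/
def points (G : NodalGraph) (i l : G.V) : G.V → ℤ := Pi.single i 1 + Pi.single l 1

lemma points_nonneg (i l : G.V) : 0 ≤ G.points i l :=
  add_nonneg (Pi.single_nonneg.2 zero_le_one) (Pi.single_nonneg.2 zero_le_one)

lemma sum_points (i l : G.V) (Y : Finset G.V) :
    ∑ v ∈ Y, G.points i l v = G.ind Y i + G.ind Y l := by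
  simp [points, sum_add_distrib, ind]

/-- The subcurves that compete for the nested tails of `(C_i, C_l)` on the curve with the nodes of
`F` contracted. -/
structure Admissible (G : NodalGraph) (i l : G.V) (F : Set G.N) (Z : Finset G.V) : Prop where
  saturated : G.Saturated F Z
  left_mem : i ∈ Z
  right_mem : l ∈ Z
  base_notMem : G.base ∉ Z

/-- An admissible subcurve with `c` terminal points. -/
def AdmissibleCut (G : NodalGraph) (i l : G.V) (F : Set G.N) (c : ℕ) (Z : Finset G.V) : Prop :=
  G.Admissible i l F Z ∧ G.k Z = c

variable {i l : G.V} {F : Set G.N}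

namespace Admissible

variable {A B : Finset G.V}

lemma inter (hA : G.Admissible i l F A) (hB : G.Admissible i l F B) :
    G.Admissible i l F (A ∩ B) :=
  ⟨hA.1.inter hB.1, mem_inter.2 ⟨hA.2, hB.2⟩, mem_inter.2 ⟨hA.3, hB.3⟩,
    fun h => hA.4 (mem_inter.1 h).1⟩

lemma union (hA : G.Admissible i l F A) (hB : G.Admissible i l F B) :
    G.Admissible i l F (A ∪ B) :=
  ⟨hA.1.union hB.1, mem_union_left _ hA.2, mem_union_left _ hA.3,
    fun h => (mem_union.1 h).elim hA.4 hB.4⟩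

lemma mono {F' : Set G.N} (hA : G.Admissible i l F' A) (hF : F ⊆ F') : G.Admissible i l F A :=
  ⟨hA.1.mono hF, hA.2, hA.3, hA.4⟩

lemma nonempty (hA : G.Admissible i l F A) : A.Nonempty := ⟨i, hA.left_mem⟩

end Admissible

lemma subset_of_minimal_admissibleCut {c : ℕ} (hmin : ∀ Z, G.Admissible i l F Z → c ≤ G.k Z)
    {U Z : Finset G.V} (hU : Minimal (G.AdmissibleCut i l F c) U) (hZ : G.Admissible i l F Z)
    (hk : G.k Z ≤ c) : U ⊆ Z := by
  have hcap := hU.1.1.inter hZ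
  have hcapc := hmin _ hcap
  have hcup := hmin _ (hU.1.1.union hZ)
  have hsub := k_inter_add_k_union_le U Z
  have hUc := hU.1.2
  exact (hU.2 ⟨hcap, by omega⟩ inter_subset_left).trans inter_subset_right

namespace IsQuasistable

variable {f : G.V → ℤ}

lemma superlevel_spec (hf : G.IsQuasistable (G.points i l) F f) (hF : G.BridgelessMod F) {s : ℤ}
    (hs : 1 ≤ s) {v : G.V} (hv : s ≤ f v) :
    G.Admissible i l F (superlevel f s) ∧ G.k (superlevel f s) ≤ 3 ∧
      G.dirichlet f (G.ind (superlevel f s)) = G.k (superlevel f s) := by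
  set L := superlevel f s
  have hb : G.base ∉ L := by
    rw [mem_superlevel, hf.base_eq_zero]; omega
  have hL : G.Saturated F L := saturated_superlevel hf.slope_eq_zero s
  have hne : L.Nonempty := ⟨v, mem_superlevel.2 hv⟩
  have hk : (2 : ℤ) ≤ G.k L := by exact_mod_cast hF L hL hne (ne_univ_of_notMem hb)
  have hle : (G.k L : ℤ) ≤ G.dirichlet f (G.ind L) := k_superlevel_le f s
  have hlt := hf.lt_k L hb hL hne
  rw [twistDeg, sum_points] at hlt
  have hi : i ∈ L := by
    by_contra hi
    have : G.ind L l ≤ 1 := by unfold ind; split_ifs <;> norm_num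
    rw [ind_of_notMem hi] at hlt
    omega
  have hl : l ∈ L := by
    by_contra hl
    rw [ind_of_mem hi, ind_of_notMem hl] at hlt
    omega
  rw [ind_of_mem hi, ind_of_mem hl] at hlt
  exact ⟨⟨hL, hi, hl, hb⟩, by omega, by omega⟩

lemma le_left (hf : G.IsQuasistable (G.points i l) F f) (hF : G.BridgelessMod F) (v : G.V) :
    f v ≤ f i := by
  by_cases hv : 1 ≤ f v
  · exact mem_superlevel.1 (hf.superlevel_spec hF hv le_rfl).1.left_mem
  · have := hf.nonneg (points_nonneg i l) hF i
    omega

lemma sub_le_one (hf : G.IsQuasistable (G.points i l) F f) (hF : G.BridgelessMod F) {e : G.N}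
    {u v : G.V} (he : G.Joins e u v) : f u - f v ≤ 1 := by
  by_contra! hlt
  have hv := hf.nonneg (points_nonneg i l) hF v
  have hspec := (hf.superlevel_spec hF (s := f u) (by omega) le_rfl).2.2
  have hadd := k_superlevel_add_le he (s := f u) le_rfl (by omega)
  omega

lemma one_le_left (hf : G.IsQuasistable (G.points i l) F f) (hF : G.BridgelessMod F)
    {U : Finset G.V} (hU : G.Admissible i l F U) (hk : G.k U ≤ 3) : 1 ≤ f i := by
  by_contra! hlt
  have hzero : f = 0 := funext fun v =>
    le_antisymm ((hf.le_left hF v).trans (show f i ≤ 0 by omega))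
      (hf.nonneg (points_nonneg i l) hF v)
  have hle := hf.neg_k_le U hU.base_notMem hU.saturated
  rw [twistDeg, sum_points, ind_of_mem hU.left_mem, ind_of_mem hU.right_mem, hzero, map_zero,
    LinearMap.zero_apply] at hle
  omega

lemma exists_joins_of_le_outside (hf : G.IsQuasistable (G.points i l) F f) {U : Finset G.V}
    (hU : G.Admissible i l F U) (hmin : ∀ Z, G.Admissible i l F Z → G.k U ≤ G.k Z) {v : G.V}
    (hv : v ∉ U) (hfv : 1 ≤ f v) :
    ∃ e, ∃ u₁ ∈ U, ∃ v₁ ∉ U, G.Joins e u₁ v₁ ∧ f v ≤ f v₁ ∧ f v₁ < f u₁ := by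
  by_contra! hno
  set L := superlevel f (f v)
  have hL : G.Saturated F L := saturated_superlevel hf.slope_eq_zero (f v)
  have hbL : G.base ∉ L := by
    rw [mem_superlevel, hf.base_eq_zero]; omega
  have hle : (G.k (L \ U) + G.k (U ∪ L) : ℤ) ≤ G.k U + 2 * G.dirichlet f (G.ind (L \ U)) :=
    k_sdiff_add_k_union_le fun e u₁ hu₁ v₁ hv₁ he =>
      hno e u₁ hu₁ v₁ (mem_sdiff.1 hv₁).2 he (mem_superlevel.1 (mem_sdiff.1 hv₁).1)
  have hcup := hmin (U ∪ L) ⟨hU.saturated.union hL, mem_union_left _ hU.left_mem,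
    mem_union_left _ hU.right_mem, fun h => (mem_union.1 h).elim hU.base_notMem hbL⟩
  have hlt := hf.lt_k (L \ U) (fun h => hbL (mem_sdiff.1 h).1) (hL.sdiff hU.saturated)
    ⟨v, mem_sdiff.2 ⟨mem_superlevel.2 le_rfl, hv⟩⟩
  rw [twistDeg, sum_points, ind_of_notMem fun h => (mem_sdiff.1 h).2 hU.left_mem,
    ind_of_notMem fun h => (mem_sdiff.1 h).2 hU.right_mem] at hlt
  omega

lemma exists_joins_of_lt_inside (hf : G.IsQuasistable (G.points i l) F f)
    (hF : G.BridgelessMod F) {c : ℕ} (hmin : ∀ Z, G.Admissible i l F Z → c ≤ G.k Z)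
    {U : Finset G.V} (hU : Minimal (G.AdmissibleCut i l F c) U) {u : G.V} (hu : u ∈ U)
    (hfu : f u < f i) :
    ∃ e, ∃ u₂ ∈ U, ∃ v₂ ∉ U, G.Joins e u₂ v₂ ∧ f v₂ < f u₂ ∧ f u₂ ≤ f u := by
  by_contra! hno
  set L := superlevel f (f u + 1)
  have hfu0 := hf.nonneg (points_nonneg i l) hF u
  have hL : G.Admissible i l F L := (hf.superlevel_spec hF (by omega) hfu).1
  have huL : u ∉ L := by simp [L, mem_superlevel]
  have hle : G.k (U \ L) + 2 * G.dirichlet f (G.ind (U \ L)) + G.k (U ∩ L) ≤ (G.k U : ℤ) :=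
    k_sdiff_add_k_inter_le fun e u₂ hu₂ v₂ hv₂ he => by
      obtain ⟨hu₂U, hu₂L⟩ := mem_sdiff.1 hu₂
      rw [mem_superlevel] at hu₂L
      by_contra! hlt
      exact absurd (hno e u₂ hu₂U v₂ hv₂ he hlt) (by omega)
  have hge := hf.neg_k_le (U \ L) (fun h => hU.1.1.base_notMem (mem_sdiff.1 h).1)
    (hU.1.1.saturated.sdiff hL.saturated)
  rw [twistDeg, sum_points, ind_of_notMem fun h => (mem_sdiff.1 h).2 hL.left_mem,
    ind_of_notMem fun h => (mem_sdiff.1 h).2 hL.right_mem] at hge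
  have hcap := hU.1.1.inter hL
  have hkU := hU.1.2
  have hsub := hU.2 ⟨hcap, le_antisymm (by omega) (hmin _ hcap)⟩ inter_subset_left
  exact huL (mem_inter.1 (hsub hu)).2

lemma lt_of_joins_minimal (hf : G.IsQuasistable (G.points i l) F f) (hF : G.BridgelessMod F)
    {c : ℕ} (hc : c ≤ 3) (hmin : ∀ Z, G.Admissible i l F Z → c ≤ G.k Z) {U : Finset G.V}
    (hU : Minimal (G.AdmissibleCut i l F c) U) {e : G.N} {u v : G.V} (he : G.Joins e u v)
    (hu : u ∈ U) (hv : v ∉ U) : f v < f u := by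
  by_contra! hle
  have hkU := hU.1.2
  have hmin' : ∀ Z, G.Admissible i l F Z → G.k U ≤ G.k Z := fun Z hZ => hkU ▸ hmin Z hZ
  have hfi := hf.one_le_left hF hU.1.1 (by omega)
  have hui : f u < f i := by
    by_contra! hui
    obtain ⟨-, u₁, -, v₁, -, -, hv₁, hlt⟩ :=
      hf.exists_joins_of_le_outside hU.1.1 hmin' hv (by omega)
    have := hf.le_left hF u₁
    omega
  obtain ⟨e₂, u₂, hu₂, v₂, hv₂, he₂, hlt₂, hle₂⟩ := hf.exists_joins_of_lt_inside hF hmin hU hu hui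
  have hv₂0 := hf.nonneg (points_nonneg i l) hF v₂
  obtain ⟨e₁, u₁, hu₁, v₁, hv₁, he₁, hle₁, hlt₁⟩ :=
    hf.exists_joins_of_le_outside hU.1.1 hmin' hv (by omega)
  -- `e`, `e₁`, `e₂` are distinct, so `c = 3` and `U` lies in the top superlevel set of `f`
  have hthree : 2 < #(G.Term U) := two_lt_card.2
    ⟨e, mem_Term_iff_exists_joins.2 ⟨u, hu, v, hv, he⟩,
      e₁, mem_Term_iff_exists_joins.2 ⟨u₁, hu₁, v₁, hv₁, he₁⟩,
      e₂, mem_Term_iff_exists_joins.2 ⟨u₂, hu₂, v₂, hv₂, he₂⟩,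
      by rintro rfl; obtain ⟨rfl, rfl⟩ := he.eq_and_eq he₁ hu hv₁; omega,
      by rintro rfl; obtain ⟨rfl, rfl⟩ := he.eq_and_eq he₂ hu hv₂; omega,
      by rintro rfl; obtain ⟨rfl, rfl⟩ := he₁.eq_and_eq he₂ hu₁ hv₂; omega⟩
  obtain ⟨hL, hkL, -⟩ := hf.superlevel_spec hF hfi le_rfl
  have hUL := subset_of_minimal_admissibleCut hmin hU hL (by rw [← hkU]; exact hkL.trans hthree)
  exact absurd (mem_superlevel.1 (hUL hu)) (by omega)

lemma sub_ind (hf : G.IsQuasistable (G.points i l) F f) (hF : G.BridgelessMod F) {c : ℕ}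
    (hc : c ≤ 3) (hmin : ∀ Z, G.Admissible i l F Z → c ≤ G.k Z) {U : Finset G.V}
    (hU : Minimal (G.AdmissibleCut i l F c) U) :
    G.IsQuasistable (G.points i l) (F ∪ G.Term U) (f - G.ind U) := by
  refine hf.sub Set.subset_union_left (ind_of_notMem hU.1.1.base_notMem) ?_
    fun e he => slope_ind_eq_zero fun h => he (Or.inr h)
  rintro e (he | he)
  · rw [hf.slope_eq_zero e he, hU.1.1.saturated.slope_ind he]
  · obtain ⟨u, hu, v, hv, huv⟩ := mem_Term_iff_exists_joins.1 he
    have hlt := hf.lt_of_joins_minimal hF hc hmin hU huv hu hv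
    have hle := hf.sub_le_one hF huv
    exact huv.slope_eq_slope (by rw [ind_of_mem hu, ind_of_notMem hv]; omega)

lemma eq_zero (hf : G.IsQuasistable (G.points i l) F f) (hF : G.BridgelessMod F)
    (hno : ∀ Z, G.Admissible i l F Z → 3 < G.k Z) : f = 0 := by
  funext v
  refine le_antisymm ?_ (hf.nonneg (points_nonneg i l) hF v)
  by_contra! hv
  obtain ⟨hL, hk, -⟩ := hf.superlevel_spec hF hv le_rfl
  exact absurd (hno _ hL) (by omega)

end IsQuasistable

/-! ### Chains of nested tails -/

/-- The member preceding `W t` in the chain `W`, with the convention `W (-1) = ∅`. -/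
def prev (W : ℕ → Finset G.V) (t : ℕ) : Finset G.V := if t = 0 then ∅ else W (t - 1)

/-- The shape common to the chains of nested 2-tails and of nested 3-tails: each member is minimal
among the subcurves with property `Q` that succeed the previous one, and no further member can be
appended. -/
structure IsGreedyChain (G : NodalGraph) (Q : Finset G.V → Prop) (M : ℕ) (W : ℕ → Finset G.V) :
    Prop where
  minimal : ∀ t < M, Minimal (fun Z => Q Z ∧ G.prec (prev W t) Z) (W t)
  terminal : ¬∃ Z, Q Z ∧ G.prec (prev W M) Z

/-- The nodes of `F` together with the terminal points of `W 0, …, W (t - 1)`. -/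
def cutNodes (G : NodalGraph) (F : Set G.N) (W : ℕ → Finset G.V) (t : ℕ) : Set G.N :=
  F ∪ ⋃ s < t, (G.Term (W s) : Set G.N)

variable {W : ℕ → Finset G.V} {M c : ℕ}

lemma cutNodes_zero : G.cutNodes F W 0 = F := by simp [cutNodes]

lemma cutNodes_succ (t : ℕ) : G.cutNodes F W (t + 1) = G.cutNodes F W t ∪ G.Term (W t) := by
  rw [cutNodes, Set.biUnion_lt_succ, ← Set.union_assoc, cutNodes]

lemma subset_cutNodes (t : ℕ) : F ⊆ G.cutNodes F W t := Set.subset_union_left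

lemma saturated_cutNodes {t : ℕ} {Z : Finset G.V} :
    G.Saturated (G.cutNodes F W t) Z ↔
      G.Saturated F Z ∧ ∀ s < t, G.Term (W s) ∩ G.Term Z = ∅ := by
  simp only [saturated_iff, cutNodes, ← disjoint_iff_inter_eq_empty, disjoint_left]
  simp only [Set.mem_union, Set.mem_iUnion, mem_coe]
  grind

namespace IsGreedyChain

variable {Q : Finset G.V → Prop}

lemma subset_of_le (hW : G.IsGreedyChain Q M W) {s t : ℕ} (hst : s ≤ t) (ht : t < M) :
    W s ⊆ W t := by
  induction t, hst using Nat.le_induction with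
  | base => exact Subset.rfl
  | succ t _ ih => exact (ih (by omega)).trans (hW.minimal (t + 1) ht).1.2.1.1

lemma Term_inter_Term (hW : G.IsGreedyChain Q M W) {s t : ℕ} (hst : s < t) (ht : t < M) :
    G.Term (W s) ∩ G.Term (W t) = ∅ := by
  obtain ⟨t, rfl⟩ : ∃ r, t = r + 1 := ⟨t - 1, by omega⟩
  obtain ⟨hss, hdisj⟩ : G.prec (W t) (W (t + 1)) := (hW.minimal _ ht).1.2
  have hsub := Term_inter_Term_subset (hW.subset_of_le (Nat.le_of_lt_succ hst) (by omega)) hss.1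
  exact subset_empty.1 (hdisj ▸ subset_inter hsub inter_subset_right)

lemma minimal_cutNodes_of_prec (hW : G.IsGreedyChain (G.AdmissibleCut i l F c) M W) {t : ℕ}
    (ht : t < M)
    (hprec : ∀ Z, G.AdmissibleCut i l (G.cutNodes F W t) c Z → G.prec (prev W t) Z) :
    Minimal (G.AdmissibleCut i l (G.cutNodes F W t) c) (W t) := by
  have hWt := (hW.minimal t ht).1.1
  refine ⟨⟨⟨saturated_cutNodes.2 ⟨hWt.1.saturated, fun s hs => hW.Term_inter_Term hs ht⟩,
    hWt.1.left_mem, hWt.1.right_mem, hWt.1.base_notMem⟩, hWt.2⟩, fun Z hZ => ?_⟩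
  exact (hW.minimal t ht).2 ⟨⟨hZ.1.mono (subset_cutNodes t), hZ.2⟩, hprec Z hZ⟩

lemma prec_of_admissibleCut (hW : G.IsGreedyChain (G.AdmissibleCut i l F c) M W) (hc : 1 ≤ c)
    (hmin : ∀ Z, G.Admissible i l F Z → c ≤ G.k Z) {t : ℕ} (ht : t ≤ M) {Z : Finset G.V}
    (hZ : G.AdmissibleCut i l (G.cutNodes F W t) c Z) : G.prec (prev W t) Z := by
  induction t generalizing Z with
  | zero => exact ⟨empty_ssubset.2 hZ.1.nonempty, by rw [prev, if_pos rfl, Term_empty, empty_inter]⟩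
  | succ t ih =>
    have hsub : W t ⊆ Z := subset_of_minimal_admissibleCut
      (fun Y hY => hmin Y (hY.mono (subset_cutNodes t)))
      (hW.minimal_cutNodes_of_prec ht fun Y hY => ih (by omega) hY)
      (hZ.1.mono (cutNodes_succ (F := F) (W := W) t ▸ Set.subset_union_left)) hZ.2.le
    have hdisj := (saturated_cutNodes.1 hZ.1.saturated).2 t t.lt_succ_self
    refine ⟨hsub.ssubset_of_ne ?_, hdisj⟩
    rintro rfl
    have hk := hZ.2
    rw [inter_self] at hdisj
    rw [k, hdisj, card_empty] at hk
    omega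

lemma minimal_cutNodes (hW : G.IsGreedyChain (G.AdmissibleCut i l F c) M W) (hc : 1 ≤ c)
    (hmin : ∀ Z, G.Admissible i l F Z → c ≤ G.k Z) {t : ℕ} (ht : t < M) :
    Minimal (G.AdmissibleCut i l (G.cutNodes F W t) c) (W t) :=
  hW.minimal_cutNodes_of_prec ht fun _ => hW.prec_of_admissibleCut hc hmin ht.le

lemma lt_k (hW : G.IsGreedyChain (G.AdmissibleCut i l F c) M W) (hc : 1 ≤ c)
    (hmin : ∀ Z, G.Admissible i l F Z → c ≤ G.k Z) {Z : Finset G.V}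
    (hZ : G.Admissible i l (G.cutNodes F W M) Z) : c < G.k Z := by
  have hZF := hZ.mono (subset_cutNodes M)
  refine lt_of_le_of_ne (hmin Z hZF) fun h => hW.terminal ⟨Z, ⟨hZF, h.symm⟩, ?_⟩
  exact hW.prec_of_admissibleCut hc hmin le_rfl ⟨hZ, h.symm⟩

end IsGreedyChain

lemma IsQuasistable.sub_sum_ind {f : G.V → ℤ} (hf : G.IsQuasistable (G.points i l) F f)
    (hF : G.BridgelessMod F) (hc : 1 ≤ c) (hc' : c ≤ 3)
    (hmin : ∀ Z, G.Admissible i l F Z → c ≤ G.k Z)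
    (hW : G.IsGreedyChain (G.AdmissibleCut i l F c) M W) {t : ℕ} (ht : t ≤ M) :
    G.IsQuasistable (G.points i l) (G.cutNodes F W t) (f - ∑ s ∈ range t, G.ind (W s)) := by
  induction t with
  | zero => simpa [cutNodes_zero] using hf
  | succ t ih =>
    rw [cutNodes_succ, sum_range_succ, ← sub_sub]
    exact (ih (by omega)).sub_ind (hF.mono (subset_cutNodes t)) hc'
      (fun Z hZ => hmin Z (hZ.mono (subset_cutNodes t))) (hW.minimal_cutNodes hc hmin ht)

lemma Admissible.isTail {Z : Finset G.V} (hZ : G.Admissible i l F Z) (hF : G.BridgelessMod F)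
    (hk : G.k Z ≤ 3) : G.IsTail Z :=
  isTail_of_k_lt (c := 2) hF hZ.nonempty (ne_univ_of_notMem hZ.base_notMem) hZ.saturated (by omega)

lemma cond2_iff (hG : G.Connected) {Z : Finset G.V} :
    G.cond2 i l Z ↔ G.AdmissibleCut i l G.bridges 2 Z := by
  constructor
  · rintro ⟨⟨ht, hk⟩, hi, hl, hb⟩
    exact ⟨⟨ht.saturated_bridges hk.ge, hi, hl, hb⟩, hk⟩
  · rintro ⟨hZ, hk⟩
    exact ⟨⟨hZ.isTail (bridgelessMod_bridges hG) (by omega), hk⟩, hZ.left_mem, hZ.right_mem,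
      hZ.base_notMem⟩

lemma cond3_iff (hG : G.Connected) {Z : Finset G.V} :
    G.cond3 i l (G.chainSet M W) Z ↔ G.AdmissibleCut i l (G.cutNodes G.bridges W M) 3 Z := by
  constructor
  · rintro ⟨⟨ht, hk⟩, hi, hl, hb, hfree⟩
    refine ⟨⟨saturated_cutNodes.2 ⟨ht.saturated_bridges (by omega), fun s hs => ?_⟩,
      hi, hl, hb⟩, hk⟩
    rw [inter_comm]
    exact hfree _ ⟨s, hs, rfl⟩
  · rintro ⟨hZ, hk⟩
    refine ⟨⟨hZ.isTail ((bridgelessMod_bridges hG).mono (subset_cutNodes M)) hk.le, hk⟩,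
      hZ.left_mem, hZ.right_mem, hZ.base_notMem, ?_⟩
    rintro _ ⟨s, hs, rfl⟩
    rw [free, inter_comm]
    exact (saturated_cutNodes.1 hZ.saturated).2 s hs

lemma IsNested2.isGreedyChain (hG : G.Connected) (h : G.IsNested2 i l M W) :
    G.IsGreedyChain (G.AdmissibleCut i l G.bridges 2) M W := by
  have hcond : G.cond2 i l = G.AdmissibleCut i l G.bridges 2 :=
    funext fun _ => propext (cond2_iff hG)
  exact hcond ▸ ⟨h.1, h.2⟩

lemma IsNested3.isGreedyChain (hG : G.Connected) {M₂ : ℕ} {W₂ : ℕ → Finset G.V}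
    (h : G.IsNested3 i l (G.chainSet M₂ W₂) M W) :
    G.IsGreedyChain (G.AdmissibleCut i l (G.cutNodes G.bridges W₂ M₂) 3) M W := by
  have hcond : G.cond3 i l (G.chainSet M₂ W₂) =
      G.AdmissibleCut i l (G.cutNodes G.bridges W₂ M₂) 3 :=
    funext fun _ => propext (cond3_iff hG)
  exact hcond ▸ ⟨h.1, h.2⟩

lemma mem_T1_iff (hG : G.Connected) {Z : Finset G.V} :
    Z ∈ G.T1 i ↔ (G.k Z = 1 ∧ G.base ∉ Z) ∧ i ∈ Z := by
  constructor
  · rintro ⟨⟨-, hk⟩, hi, hb⟩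
    exact ⟨⟨hk, hb⟩, hi⟩
  · rintro ⟨⟨hk, hb⟩, hi⟩
    exact ⟨(isKTail_one_iff hG ⟨i, hi⟩).2 ⟨ne_univ_of_notMem hb, hk⟩, hi, hb⟩

open scoped Classical in
lemma card_T1_filter_mem (hG : G.Connected) (i v : G.V) :
    (#{Z | Z ∈ G.T1 i ∧ v ∈ Z} : ℤ) =
      ∑ Z with G.k Z = 1 ∧ G.base ∉ Z, G.ind Z i * G.ind Z v := by
  simp only [mem_T1_iff hG, and_assoc, ind, card_filter, sum_filter, Nat.cast_sum]
  refine sum_congr rfl fun Z _ => ?_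
  split_ifs <;> simp_all

lemma neg_tailCoeff (hG : G.Connected) (i l : G.V) (M₂ M₃ : ℕ) (W₂ W₃ : ℕ → Finset G.V) :
    -G.tailCoeff i l M₂ M₃ W₂ W₃ = G.bridgeTwist (G.points i l) +
      ∑ t ∈ range M₂, G.ind (W₂ t) + ∑ t ∈ range M₃, G.ind (W₃ t) := by
  have hcard : ∀ M (W : ℕ → Finset G.V) v,
      (#{t ∈ range M | v ∈ W t} : ℤ) = ∑ t ∈ range M, G.ind (W t) v := fun M W v => by
    simp [ind]
  funext v
  simp only [Pi.neg_apply, tailCoeff, neg_neg, card_T1_filter_mem hG, hcard, Pi.add_apply,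
    Finset.sum_apply, bridgeTwist, sum_points, Pi.smul_apply, smul_eq_mul, add_mul,
    sum_add_distrib]

theorem isQuasistable_neg_tailCoeff (hG : G.Connected) {M₂ M₃ : ℕ} {W₂ W₃ : ℕ → Finset G.V}
    (h2 : G.IsNested2 i l M₂ W₂) (h3 : G.IsNested3 i l (G.chainSet M₂ W₂) M₃ W₃) :
    G.IsQuasistable (G.points i l) ∅ (-G.tailCoeff i l M₂ M₃ W₂ W₃) := by
  have hb := bridgelessMod_bridges hG
  have hc2 := h2.isGreedyChain hG
  have hc3 := h3.isGreedyChain hG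
  have hmin2 : ∀ Z, G.Admissible i l G.bridges Z → 2 ≤ G.k Z := fun Z hZ =>
    hb Z hZ.saturated hZ.nonempty (ne_univ_of_notMem hZ.base_notMem)
  have hmin3 : ∀ Z, G.Admissible i l (G.cutNodes G.bridges W₂ M₂) Z → 3 ≤ G.k Z := fun Z hZ =>
    hc2.lt_k one_le_two hmin2 hZ
  obtain ⟨f, hf⟩ := exists_isQuasistable hG (G.points i l)
  have hf2 := (hf.sub_bridgeTwist hG).sub_sum_ind hb one_le_two (by norm_num) hmin2 hc2 le_rfl
  have hb2 := hb.mono (subset_cutNodes (W := W₂) M₂)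
  have hf3 := hf2.sub_sum_ind hb2 (by norm_num) le_rfl hmin3 hc3 le_rfl
  have hzero := hf3.eq_zero (hb2.mono (subset_cutNodes M₃)) fun Z hZ =>
    hc3.lt_k (by norm_num) hmin3 hZ
  have heq : f = -G.tailCoeff i l M₂ M₃ W₂ W₃ := by
    rw [neg_tailCoeff hG, ← sub_eq_zero, ← hzero]
    abel
  exact heq ▸ hf

/-! ### Comparison of quasistable functions -/

namespace IsQuasistable

variable {D D' f g : G.V → ℤ}

lemma dirichlet_sub_lt (hf : G.IsQuasistable D ∅ f) (hg : G.IsQuasistable D' ∅ g)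
    (hdeg : ∑ v, D v = ∑ v, D' v) {Y : Finset G.V} (hne : Y.Nonempty) (huniv : Y ≠ univ) :
    G.dirichlet (f - g) (G.ind Y) < G.k Y + ∑ v ∈ Y, D v - ∑ v ∈ Y, D' v := by
  rw [map_sub, LinearMap.sub_apply]
  by_cases hb : G.base ∈ Y
  · have hb' : G.base ∉ Yᶜ := by simpa using hb
    have hne' : Yᶜ.Nonempty := by rwa [nonempty_iff_ne_empty, Ne, compl_eq_empty_iff]
    have hle := hf.neg_k_le Yᶜ hb' (saturated_empty _)
    have hlt := hg.lt_k Yᶜ hb' (saturated_empty _) hne'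
    rw [twistDeg, dirichlet_ind_compl, k_compl] at hle hlt
    have hD := sum_add_sum_compl Y D
    have hD' := sum_add_sum_compl Y D'
    omega
  · have hlt := hf.lt_k Y hb (saturated_empty _) hne
    have hle := hg.neg_k_le Y hb (saturated_empty _)
    rw [twistDeg] at hle hlt
    omega

variable {i j : G.V}

lemma dirichlet_sub_lt_of_add_single_eq (hf : G.IsQuasistable D ∅ f)
    (hg : G.IsQuasistable D' ∅ g) (hD : D + Pi.single j 1 = D' + Pi.single i 1)
    {Y : Finset G.V} (hne : Y.Nonempty) (huniv : Y ≠ univ) :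
    G.dirichlet (f - g) (G.ind Y) < G.k Y + G.ind Y i - G.ind Y j := by
  have hsum : ∀ S : Finset G.V, ∑ v ∈ S, D v + G.ind S j = ∑ v ∈ S, D' v + G.ind S i :=
    fun S => by simpa [sum_add_distrib, ind] using congrArg (fun E => ∑ v ∈ S, E v) hD
  have hdeg : ∑ v, D v = ∑ v, D' v := by simpa [ind] using hsum univ
  linarith [hf.dirichlet_sub_lt hg hdeg hne huniv, hsum Y]

lemma mem_and_notMem_superlevel_sub (hf : G.IsQuasistable D ∅ f) (hg : G.IsQuasistable D' ∅ g)
    (hD : D + Pi.single j 1 = D' + Pi.single i 1) {s : ℤ} {v w : G.V} (hv : s ≤ (f - g) v)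
    (hw : (f - g) w < s) : i ∈ superlevel (f - g) s ∧ j ∉ superlevel (f - g) s := by
  have hlt := hf.dirichlet_sub_lt_of_add_single_eq hg hD ⟨v, mem_superlevel.2 hv⟩
    (ne_univ_of_notMem fun h => (mem_superlevel.1 h).not_gt hw)
  have hle := k_superlevel_le (f - g) s
  unfold ind at hlt hle
  split_ifs at hlt <;> first | omega | exact ⟨‹_›, ‹_›⟩

lemma exists_eq_add_ind (hf : G.IsQuasistable D ∅ f) (hg : G.IsQuasistable D' ∅ g)
    (hD : D + Pi.single j 1 = D' + Pi.single i 1) {e : G.N} (he : G.Joins e i j) :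
    ∃ Y : Finset G.V, (Y = ∅ ∨ (i ∈ Y ∧ j ∉ Y)) ∧ ∃ c : ℤ, ∀ v, f v = g v + G.ind Y v + c := by
  set d := f - g
  have hmin : ∀ v, d j ≤ d v := fun v => by
    by_contra! hv
    exact (hf.mem_and_notMem_superlevel_sub hg hD le_rfl hv).2 (mem_superlevel.2 le_rfl)
  have hmax : ∀ v, d v ≤ d j + 1 := fun v => by
    by_contra! hv
    set L := superlevel d (d v)
    obtain ⟨hi, hj⟩ : i ∈ L ∧ j ∉ L :=
      hf.mem_and_notMem_superlevel_sub hg hD le_rfl (show d j < d v by omega)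
    have hlt : G.dirichlet d (G.ind L) < G.k L + G.ind L i - G.ind L j :=
      hf.dirichlet_sub_lt_of_add_single_eq hg hD ⟨i, hi⟩ (ne_univ_of_notMem hj)
    have hle : G.k L + (d i - d j) ≤ G.dirichlet d (G.ind L) + 1 :=
      k_superlevel_add_le he (mem_superlevel.1 hi) (show d j < d v by omega)
    have hvi := mem_superlevel.1 hi
    rw [ind_of_mem hi, ind_of_notMem hj] at hlt
    omega
  refine ⟨superlevel d (d j + 1), ?_, d j, fun v => ?_⟩
  · refine (eq_empty_or_nonempty _).imp_right fun ⟨v, hv⟩ => ?_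
    exact hf.mem_and_notMem_superlevel_sub hg hD (mem_superlevel.1 hv) (lt_add_one (d j))
  · have hdv : d v = f v - g v := rfl
    have := hmin v
    have := hmax v
    simp only [ind, mem_superlevel]
    split_ifs <;> omega

end IsQuasistable

lemma multideg_sub (a b : G.V → ℤ) (m : G.V) :
    G.multideg (a - b) m = G.multideg a m - G.multideg b m := by
  simp only [multideg, Pi.sub_apply, sub_mul, sum_sub_distrib]

lemma multideg_const (c : ℤ) (m : G.V) : G.multideg (fun _ => c) m = 0 := by
  have hsum : ∑ n ∈ univ.erase m, G.inter n m = ∑ n ∈ univ.erase m, (G.pairing n m : ℤ) :=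
    sum_congr rfl fun n hn => if_neg (ne_of_mem_erase hn)
  rw [multideg, ← mul_sum, ← add_sum_erase univ _ (mem_univ m), hsum, NodalGraph.inter, if_pos rfl,
    neg_add_cancel, mul_zero]

end NodalGraph

/-- Lemma 3.5: with `Z_{a,b}` the twisting divisors (given, via
[22, Thm 6.3], by `Z_{a,b} ≡ −Σ_{Z ∈ T_{a,b}} Z` up to multiples of `C`, i.e.
with the same multidegree), there is a possibly empty subcurve `Y` with
`C_i ⊆ Y` and `C_j ⊆ Yᶜ` such that `O_C(Z_{i,k})|_C ≅ O_C(Z_{j,k} − Y)|_C`. -/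
theorem twisters_differ_by_subcurve
    (G : NodalGraph) (hconn : G.Connected) (i j k : G.V)
    (hij : i ≠ j) (hmeet : ∃ e, G.onComp e i ∧ G.onComp e j)
    (M2i M2j M3i M3j : ℕ) (W2i W2j W3i W3j : ℕ → Finset G.V)
    (h2i : G.IsNested2 i k M2i W2i) (h2j : G.IsNested2 j k M2j W2j)
    (h3i : G.IsNested3 i k (G.chainSet M2i W2i) M3i W3i)
    (h3j : G.IsNested3 j k (G.chainSet M2j W2j) M3j W3j)
    (Zik Zjk : G.V → ℤ)
    (hZik : ∀ m, G.multideg Zik m = G.multideg (G.tailCoeff i k M2i M3i W2i W3i) m)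
    (hZjk : ∀ m, G.multideg Zjk m = G.multideg (G.tailCoeff j k M2j M3j W2j W3j) m) :
    ∃ Y : Finset G.V, (Y = ∅ ∨ (i ∈ Y ∧ j ∉ Y)) ∧
      ∀ m, G.multideg Zik m =
        G.multideg (fun v => Zjk v - (if v ∈ Y then 1 else 0)) m := by
  obtain ⟨e, hi, hj⟩ := hmeet
  obtain ⟨Y, hY, c, hc⟩ := (NodalGraph.isQuasistable_neg_tailCoeff hconn h2i h3i).exists_eq_add_ind
    (NodalGraph.isQuasistable_neg_tailCoeff hconn h2j h3j)
    (by simp only [NodalGraph.points]; abel) (NodalGraph.joins_of_onComp hij hi hj)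
  have htail : G.tailCoeff i k M2i M3i W2i W3i =
      G.tailCoeff j k M2j M3j W2j W3j - G.ind Y - fun _ => c := by
    funext v
    have := hc v
    simp only [Pi.neg_apply, Pi.sub_apply] at this ⊢
    omega
  refine ⟨Y, hY, fun m => ?_⟩
  calc G.multideg Zik m
      = G.multideg (G.tailCoeff j k M2j M3j W2j W3j) m - G.multideg (G.ind Y) m := by
        rw [hZik, htail, NodalGraph.multideg_sub, NodalGraph.multideg_const, sub_zero,
          NodalGraph.multideg_sub]
    _ = G.multideg (Zjk - G.ind Y) m := by rw [NodalGraph.multideg_sub, hZjk]
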